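/- arXiv:1907.10468 — 3 statements merged into one kernel-verified Lean document; each statement's English description precedes it below -/
import Mathlib

section
/- The 3-player win-lose game Ĝ₂ has exactly one Nash equilibrium, and this Nash equilibrium is irrational (it assigns an irrational probability to some strategy); explicitly, it is the mixed profile with σ_1(0) = (√5 − 1)/2, σ_2(0) = (3 − √5)/2, σ_3(0) = (1 + √5)/8, σ_3(1) = (5 − √5)/8 and σ_3(2) = 1/4. -/
open Finset

/-- `x` is a probability distribution on the finite type `α`. -/
def IsDist {α : Type*} [Fintype α] (x : α → ℝ) : Prop :=
  (∀ s, 0 ≤ x s) ∧ ∑ s, x s = 1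

/-- Utility function of player 1 in the 3-player win-lose game `Ĝ₂`. -/
noncomputable def u₁ : Fin 2 → Fin 2 → Fin 3 → ℝ :=
  ![![![1, 1, 0], ![0, 1, 0]], ![![0, 0, 1], ![1, 0, 1]]]

/-- Utility function of player 2 in the 3-player win-lose game `Ĝ₂`. -/
noncomputable def u₂ : Fin 2 → Fin 2 → Fin 3 → ℝ :=
  ![![![0, 1, 1], ![1, 0, 0]], ![![0, 1, 0], ![1, 0, 1]]]

/-- Utility function of player 3 in the 3-player win-lose game `Ĝ₂`. -/
noncomputable def u₃ : Fin 2 → Fin 2 → Fin 3 → ℝ :=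
  ![![![1, 0, 0], ![0, 0, 1]], ![![1, 1, 0], ![0, 1, 0]]]

/-- Expected utility in the 3-player game. -/
noncomputable def eu3 (u : Fin 2 → Fin 2 → Fin 3 → ℝ)
    (x y : Fin 2 → ℝ) (z : Fin 3 → ℝ) : ℝ :=
  ∑ a, ∑ b, ∑ c, x a * y b * z c * u a b c

/-- `⟨x, y, z⟩` is a (mixed) Nash equilibrium of `Ĝ₂`. -/
def IsNashG2 (x y : Fin 2 → ℝ) (z : Fin 3 → ℝ) : Prop :=
  IsDist x ∧ IsDist y ∧ IsDist z ∧
    (∀ x', IsDist x' → eu3 u₁ x' y z ≤ eu3 u₁ x y z) ∧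
    (∀ y', IsDist y' → eu3 u₂ x y' z ≤ eu3 u₂ x y z) ∧
    (∀ z', IsDist z' → eu3 u₃ x y z' ≤ eu3 u₃ x y z)

/-- The unique Nash equilibrium of `Ĝ₂`, which is irrational. -/
noncomputable def xstar : Fin 2 → ℝ := ![(Real.sqrt 5 - 1) / 2, (3 - Real.sqrt 5) / 2]

noncomputable def ystar : Fin 2 → ℝ := ![(3 - Real.sqrt 5) / 2, (Real.sqrt 5 - 1) / 2]

noncomputable def zstar : Fin 3 → ℝ := ![(1 + Real.sqrt 5) / 8, (5 - Real.sqrt 5) / 8, 1 / 4]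

/-! At an equilibrium every pure strategy in a player's support is optimal. Excluding the
boundary cases one player at a time shows that every equilibrium of `Ĝ₂` is fully mixed, so each
player is indifferent between all her pure strategies. Indifference of player 3 reads
`y 0 = x 1 = x 0 * y 1`, which forces `(x 0)² + x 0 = 1`, i.e. `x 0 = φ - 1` with `φ` the golden
ratio; the indifference equations of players 1 and 2 are then linear in `z`. -/

open scoped goldenRatio

section BestResponse

variable {α : Type*} [Fintype α] {f x : α → ℝ}

/-- The mixed strategy `x` is a best response when the pure strategy `s` earns the payoff `f s`:
this is one player's equilibrium condition, the strategies of the others being absorbed in `f`. -/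
def IsBestResponse (f x : α → ℝ) : Prop :=
  ∀ x', IsDist x' → x' ⬝ᵥ f ≤ x ⬝ᵥ f

lemma IsDist.dotProduct_le {v : ℝ} (hx : IsDist x) (hf : ∀ s, f s ≤ v) : x ⬝ᵥ f ≤ v :=
  calc x ⬝ᵥ f ≤ ∑ s, x s * v :=
        Finset.sum_le_sum fun s _ ↦ mul_le_mul_of_nonneg_left (hf s) (hx.1 s)
    _ = v := by rw [← Finset.sum_mul, hx.2, one_mul]

lemma IsDist.exists_ne_zero (hx : IsDist x) : ∃ s, x s ≠ 0 := by
  by_contra! h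
  simpa [h] using hx.2

lemma IsBestResponse.le_dotProduct (h : IsBestResponse f x) (t : α) : f t ≤ x ⬝ᵥ f := by
  classical
  simpa using h (Pi.single t 1) (single_mem_stdSimplex ℝ t)

theorem isBestResponse_iff (hx : IsDist x) :
    IsBestResponse f x ↔ ∀ s t, f s < f t → x s = 0 := by
  refine ⟨fun h s t hst ↦ ?_, fun h x' hx' ↦ ?_⟩
  · have sum_regret : ∑ r, x r * (x ⬝ᵥ f - f r) = 0 := by
      simp only [mul_sub, Finset.sum_sub_distrib, ← Finset.sum_mul, hx.2, one_mul]
      exact sub_self _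
    have regret_eq_zero := (Finset.sum_eq_zero_iff_of_nonneg fun r _ ↦
      mul_nonneg (hx.1 r) (sub_nonneg.2 (h.le_dotProduct r))).1 sum_regret s (Finset.mem_univ s)
    have regret_pos : 0 < x ⬝ᵥ f - f s := sub_pos.2 (hst.trans_le (h.le_dotProduct t))
    exact (mul_eq_zero.1 regret_eq_zero).resolve_right regret_pos.ne'
  · obtain ⟨s, hs⟩ := hx.exists_ne_zero
    have le_fs (t : α) : f t ≤ f s := not_lt.1 (mt (h s t) hs)
    have eq_on_support (r : α) : x r * f r = x r * f s := by
      rcases eq_or_ne (x r) 0 with hr | hr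
      · rw [hr, zero_mul, zero_mul]
      · rw [(le_fs r).antisymm (not_lt.1 (mt (h r s) hr))]
    calc x' ⬝ᵥ f ≤ f s := hx'.dotProduct_le le_fs
      _ = x ⬝ᵥ f := by
        rw [dotProduct, Finset.sum_congr rfl fun r _ ↦ eq_on_support r, ← Finset.sum_mul, hx.2,
          one_mul]

end BestResponse

section Payoff

variable (u : Fin 2 → Fin 2 → Fin 3 → ℝ) (x y : Fin 2 → ℝ) (z : Fin 3 → ℝ)

/-- The expected utility `u` of each pure strategy of player 1 when the others play `y` and `z`. -/
noncomputable def payoff₁ (a : Fin 2) : ℝ := ∑ b, ∑ c, y b * z c * u a b c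

/-- The expected utility `u` of each pure strategy of player 2 when the others play `x` and `z`. -/
noncomputable def payoff₂ (b : Fin 2) : ℝ := ∑ a, ∑ c, x a * z c * u a b c

/-- The expected utility `u` of each pure strategy of player 3 when the others play `x` and `y`. -/
noncomputable def payoff₃ (c : Fin 3) : ℝ := ∑ a, ∑ b, x a * y b * u a b c

lemma eu3_eq_dotProduct_payoff₁ : eu3 u x y z = x ⬝ᵥ payoff₁ u y z := by
  simp only [eu3, payoff₁, dotProduct, Fin.sum_univ_two, Fin.sum_univ_three]
  ring

lemma eu3_eq_dotProduct_payoff₂ : eu3 u x y z = y ⬝ᵥ payoff₂ u x z := by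
  simp only [eu3, payoff₂, dotProduct, Fin.sum_univ_two, Fin.sum_univ_three]
  ring

lemma eu3_eq_dotProduct_payoff₃ : eu3 u x y z = z ⬝ᵥ payoff₃ u x y := by
  simp only [eu3, payoff₃, dotProduct, Fin.sum_univ_two, Fin.sum_univ_three]
  ring

end Payoff

variable {x y : Fin 2 → ℝ} {z : Fin 3 → ℝ}

lemma IsDist.add_eq_one (hx : IsDist x) : x 0 + x 1 = 1 := by
  simpa only [Fin.sum_univ_two] using hx.2

lemma IsDist.add_add_eq_one (hz : IsDist z) : z 0 + z 1 + z 2 = 1 := by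
  simpa only [Fin.sum_univ_three] using hz.2

lemma isDist_pair {a b : ℝ} (ha : 0 ≤ a) (hb : 0 ≤ b) (hab : a + b = 1) : IsDist ![a, b] :=
  ⟨Fin.forall_fin_two.2 ⟨ha, hb⟩, by simpa using hab⟩

lemma isDist_triple {a b c : ℝ} (ha : 0 ≤ a) (hb : 0 ≤ b) (hc : 0 ≤ c) (habc : a + b + c = 1) :
    IsDist ![a, b, c] :=
  ⟨by simp [Fin.forall_fin_succ, ha, hb, hc], by simpa [Fin.sum_univ_three] using habc⟩

lemma payoff₁_u₁_sub (hy : IsDist y) :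
    payoff₁ u₁ y z 0 - payoff₁ u₁ y z 1 = z 1 - z 2 + (y 0 - y 1) * z 0 := by
  simp only [payoff₁, u₁, Fin.sum_univ_two, Fin.sum_univ_three, Matrix.cons_val]
  linear_combination (z 1 - z 2) * hy.add_eq_one

lemma payoff₂_u₂_sub (hx : IsDist x) :
    payoff₂ u₂ x z 0 - payoff₂ u₂ x z 1 = z 1 - z 0 + (x 0 - x 1) * z 2 := by
  simp only [payoff₂, u₂, Fin.sum_univ_two, Fin.sum_univ_three, Matrix.cons_val]
  linear_combination (z 1 - z 0) * hx.add_eq_one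

lemma payoff₃_u₃ (hx : IsDist x) (hy : IsDist y) :
    payoff₃ u₃ x y = ![y 0, x 1, x 0 * y 1] := by
  ext c
  fin_cases c <;>
    simp only [payoff₃, u₃, Fin.sum_univ_two, Matrix.cons_val, Fin.zero_eta, Fin.mk_one,
      Fin.reduceFinMk]
  · linear_combination y 0 * hx.add_eq_one
  · linear_combination x 1 * hy.add_eq_one
  · ring

lemma isNashG2_iff : IsNashG2 x y z ↔ IsDist x ∧ IsDist y ∧ IsDist z ∧
    IsBestResponse (payoff₁ u₁ y z) x ∧ IsBestResponse (payoff₂ u₂ x z) y ∧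
    IsBestResponse (payoff₃ u₃ x y) z := by
  simp only [IsNashG2, IsBestResponse, eu3_eq_dotProduct_payoff₁ u₁,
    eu3_eq_dotProduct_payoff₂ u₂, eu3_eq_dotProduct_payoff₃ u₃]

theorem isNashG2_of_indifferent (hx : IsDist x) (hy : IsDist y) (hz : IsDist z)
    (h₁ : z 1 - z 2 + (y 0 - y 1) * z 0 = 0) (h₂ : z 1 - z 0 + (x 0 - x 1) * z 2 = 0)
    (h₃ : y 0 = x 1) (h₃' : x 1 = x 0 * y 1) : IsNashG2 x y z := by
  have payoff₁_eq := sub_eq_zero.1 ((payoff₁_u₁_sub hy).trans h₁)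
  have payoff₂_eq := sub_eq_zero.1 ((payoff₂_u₂_sub hx).trans h₂)
  refine isNashG2_iff.2 ⟨hx, hy, hz, (isBestResponse_iff hx).2 ?_, (isBestResponse_iff hy).2 ?_,
    (isBestResponse_iff hz).2 ?_⟩
  · simp [Fin.forall_fin_two, payoff₁_eq]
  · simp [Fin.forall_fin_two, payoff₂_eq]
  · simp [Fin.forall_fin_succ, payoff₃_u₃ hx hy, h₃, ← h₃']

namespace IsNashG2

lemma isDist₁ (h : IsNashG2 x y z) : IsDist x := h.1

lemma isDist₂ (h : IsNashG2 x y z) : IsDist y := h.2.1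

lemma isDist₃ (h : IsNashG2 x y z) : IsDist z := h.2.2.1

lemma x_eq_zero_of_lt (h : IsNashG2 x y z) {s t : Fin 2}
    (hst : payoff₁ u₁ y z s < payoff₁ u₁ y z t) : x s = 0 :=
  (isBestResponse_iff h.isDist₁).1 (isNashG2_iff.1 h).2.2.2.1 s t hst

lemma y_eq_zero_of_lt (h : IsNashG2 x y z) {s t : Fin 2}
    (hst : payoff₂ u₂ x z s < payoff₂ u₂ x z t) : y s = 0 :=
  (isBestResponse_iff h.isDist₂).1 (isNashG2_iff.1 h).2.2.2.2.1 s t hst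

lemma z_eq_zero_of_lt (h : IsNashG2 x y z) {s t : Fin 3}
    (hst : ![y 0, x 1, x 0 * y 1] s < ![y 0, x 1, x 0 * y 1] t) : z s = 0 :=
  (isBestResponse_iff h.isDist₃).1 (isNashG2_iff.1 h).2.2.2.2.2 s t
    (payoff₃_u₃ h.isDist₁ h.isDist₂ ▸ hst)

lemma x_zero_eq_zero (h : IsNashG2 x y z) (hneg : z 1 - z 2 + (y 0 - y 1) * z 0 < 0) : x 0 = 0 :=
  h.x_eq_zero_of_lt (sub_neg.1 (payoff₁_u₁_sub h.isDist₂ ▸ hneg))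

lemma x_one_eq_zero (h : IsNashG2 x y z) (hpos : 0 < z 1 - z 2 + (y 0 - y 1) * z 0) : x 1 = 0 :=
  h.x_eq_zero_of_lt (sub_pos.1 (payoff₁_u₁_sub h.isDist₂ ▸ hpos))

lemma y_zero_eq_zero (h : IsNashG2 x y z) (hneg : z 1 - z 0 + (x 0 - x 1) * z 2 < 0) : y 0 = 0 :=
  h.y_eq_zero_of_lt (sub_neg.1 (payoff₂_u₂_sub h.isDist₁ ▸ hneg))

lemma y_one_eq_zero (h : IsNashG2 x y z) (hpos : 0 < z 1 - z 0 + (x 0 - x 1) * z 2) : y 1 = 0 :=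
  h.y_eq_zero_of_lt (sub_pos.1 (payoff₂_u₂_sub h.isDist₁ ▸ hpos))

lemma x_zero_pos (h : IsNashG2 x y z) : 0 < x 0 := by
  refine (h.isDist₁.1 0).lt_of_ne' fun hx0 ↦ ?_
  have hx1 : x 1 = 1 := by linarith [h.isDist₁.add_eq_one]
  have hz2 : z 2 = 0 := h.z_eq_zero_of_lt (t := 1) (by simp [hx0, hx1])
  have hy := h.isDist₂.add_eq_one
  have hz := h.isDist₃.add_add_eq_one
  have hy1_nonneg := h.isDist₂.1 1
  have prefers_zero : z 1 - z 2 + (y 0 - y 1) * z 0 = 1 := by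
    rcases hy1_nonneg.eq_or_lt' with hy1 | hy1
    · have hy0 : y 0 = 1 := by linarith
      rw [hy0, hy1]
      linarith
    · have hz0 : z 0 = 0 := h.z_eq_zero_of_lt (t := 1) (by simpa [hx1] using by linarith)
      rw [hz0]
      linarith
  linarith [h.x_one_eq_zero (by linarith)]

lemma x_one_pos (h : IsNashG2 x y z) : 0 < x 1 := by
  refine (h.isDist₁.1 1).lt_of_ne' fun hx1 ↦ ?_
  have hx0 : x 0 = 1 := by linarith [h.isDist₁.add_eq_one]
  have hy := h.isDist₂.add_eq_one
  have hz := h.isDist₃.add_add_eq_one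
  have hz2_nonneg := h.isDist₃.1 2
  have hy0 : 0 < y 0 := by
    refine (h.isDist₂.1 0).lt_of_ne' fun hy0 ↦ ?_
    have hy1 : y 1 = 1 := by linarith
    have hz0 : z 0 = 0 := h.z_eq_zero_of_lt (t := 2) (by simp [hx0, hy0, hy1])
    have hz1 : z 1 = 0 := h.z_eq_zero_of_lt (t := 2) (by simp [hx0, hx1, hy1])
    linarith [h.x_zero_eq_zero (by rw [hz0]; linarith)]
  have hz1 : z 1 = 0 := h.z_eq_zero_of_lt (t := 0) (by simpa [hx1] using hy0)
  have hz2 : z 2 = 0 := by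
    rcases lt_or_ge (y 1) (y 0) with hlt | hle
    · exact h.z_eq_zero_of_lt (t := 0) (by simpa [hx0] using hlt)
    · by_contra hz2
      have : (y 0 - y 1) * z 0 ≤ 0 :=
        mul_nonpos_of_nonpos_of_nonneg (sub_nonpos.2 hle) (h.isDist₃.1 0)
      linarith [h.x_zero_eq_zero (by linarith [hz2_nonneg.lt_of_ne' hz2])]
  linarith [h.y_zero_eq_zero (by rw [hz2]; linarith)]

lemma indifferent₁ (h : IsNashG2 x y z) : z 1 - z 2 + (y 0 - y 1) * z 0 = 0 :=
  le_antisymm (not_lt.1 (mt h.x_one_eq_zero h.x_one_pos.ne'))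
    (not_lt.1 (mt h.x_zero_eq_zero h.x_zero_pos.ne'))

lemma y_zero_pos (h : IsNashG2 x y z) : 0 < y 0 := by
  refine (h.isDist₂.1 0).lt_of_ne' fun hy0 ↦ ?_
  have hy1 : y 1 = 1 := by linarith [h.isDist₂.add_eq_one]
  have hz0 : z 0 = 0 := h.z_eq_zero_of_lt (t := 1) (by simpa [hy0] using h.x_one_pos)
  have hz12 : z 1 = z 2 := by simpa [hz0, sub_eq_zero] using h.indifferent₁
  have hz2 : z 2 = 1 / 2 := by linarith [h.isDist₃.add_add_eq_one]
  have prefers_zero : 0 < z 1 - z 0 + (x 0 - x 1) * z 2 := by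
    rw [hz12, hz0, hz2]
    linarith [h.x_zero_pos, h.isDist₁.add_eq_one]
  linarith [h.y_one_eq_zero prefers_zero]

lemma y_one_pos (h : IsNashG2 x y z) : 0 < y 1 := by
  refine (h.isDist₂.1 1).lt_of_ne' fun hy1 ↦ ?_
  have hy0 : y 0 = 1 := by linarith [h.isDist₂.add_eq_one]
  have hz2 : z 2 = 0 := h.z_eq_zero_of_lt (t := 1) (by simpa [hy1] using h.x_one_pos)
  have hindiff := h.indifferent₁
  rw [hy0, hy1, hz2] at hindiff
  linarith [h.isDist₃.add_add_eq_one]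

lemma indifferent₂ (h : IsNashG2 x y z) : z 1 - z 0 + (x 0 - x 1) * z 2 = 0 :=
  le_antisymm (not_lt.1 (mt h.y_one_eq_zero h.y_one_pos.ne'))
    (not_lt.1 (mt h.y_zero_eq_zero h.y_zero_pos.ne'))

lemma z_zero_pos (h : IsNashG2 x y z) : 0 < z 0 := by
  refine (h.isDist₃.1 0).lt_of_ne' fun hz0 ↦ ?_
  have hz12 : z 1 = z 2 := by simpa [hz0, sub_eq_zero] using h.indifferent₁
  have hz2 : z 2 = 1 / 2 := by linarith [h.isDist₃.add_add_eq_one]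
  have hindiff := h.indifferent₂
  rw [hz12, hz0, hz2] at hindiff
  linarith [h.isDist₁.add_eq_one, h.x_zero_pos]

lemma z_two_pos (h : IsNashG2 x y z) : 0 < z 2 := by
  refine (h.isDist₃.1 2).lt_of_ne' fun hz2 ↦ ?_
  have hz10 : z 1 = z 0 := by simpa [hz2, sub_eq_zero] using h.indifferent₂
  have hz0 : z 0 = 1 / 2 := by linarith [h.isDist₃.add_add_eq_one]
  have hindiff := h.indifferent₁
  rw [hz10, hz2, hz0] at hindiff
  linarith [h.isDist₂.add_eq_one, h.y_zero_pos]

lemma z_one_pos (h : IsNashG2 x y z) : 0 < z 1 := by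
  refine (h.isDist₃.1 1).lt_of_ne' fun hz1 ↦ ?_
  have z2_lt_z0 : z 2 < z 0 :=
    calc z 2 = (y 0 - y 1) * z 0 := by linarith [h.indifferent₁]
      _ < z 0 := mul_lt_of_lt_one_left h.z_zero_pos
        (by linarith [h.isDist₂.add_eq_one, h.y_one_pos])
  have z0_lt_z2 : z 0 < z 2 :=
    calc z 0 = (x 0 - x 1) * z 2 := by linarith [h.indifferent₂]
      _ < z 2 := mul_lt_of_lt_one_left h.z_two_pos
        (by linarith [h.isDist₁.add_eq_one, h.x_one_pos])
  exact z2_lt_z0.asymm z0_lt_z2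

lemma indifferent₃ (h : IsNashG2 x y z) : y 0 = x 1 ∧ x 1 = x 0 * y 1 := by
  have payoff_le {s t : Fin 3} (hs : 0 < z s) :
      ![y 0, x 1, x 0 * y 1] t ≤ ![y 0, x 1, x 0 * y 1] s :=
    not_lt.1 (mt h.z_eq_zero_of_lt hs.ne')
  exact ⟨le_antisymm (payoff_le (s := 1) (t := 0) h.z_one_pos)
      (payoff_le (s := 0) (t := 1) h.z_zero_pos),
    le_antisymm (payoff_le (s := 2) (t := 1) h.z_two_pos)
      (payoff_le (s := 1) (t := 2) h.z_one_pos)⟩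

lemma x_zero_eq (h : IsNashG2 x y z) : x 0 = φ - 1 := by
  obtain ⟨hyx, hxy⟩ := h.indifferent₃
  have hx := h.isDist₁.add_eq_one
  have hy1 : y 1 = x 0 := by linarith [h.isDist₂.add_eq_one]
  rw [hy1] at hxy
  have quadratic : (x 0 - (φ - 1)) * (x 0 + φ) = 0 := by
    linear_combination hx - hxy - Real.goldenRatio_sq
  have factor_ne_zero := (add_pos h.x_zero_pos Real.goldenRatio_pos).ne'
  exact sub_eq_zero.1 ((mul_eq_zero.1 quadratic).resolve_right factor_ne_zero)

end IsNashG2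

lemma xstar_eq : xstar = ![φ - 1, 2 - φ] := by
  simp only [xstar, Real.goldenRatio]
  ring_nf

lemma ystar_eq : ystar = ![2 - φ, φ - 1] := by
  simp only [ystar, Real.goldenRatio]
  ring_nf

lemma zstar_eq : zstar = ![φ / 4, (3 - φ) / 4, 1 / 4] := by
  simp only [zstar, Real.goldenRatio]
  ring_nf

theorem IsNashG2.eq_star (h : IsNashG2 x y z) : x = xstar ∧ y = ystar ∧ z = zstar := by
  have hx0 := h.x_zero_eq
  have hx1 : x 1 = 2 - φ := by linarith [h.isDist₁.add_eq_one]
  have hy0 : y 0 = 2 - φ := h.indifferent₃.1.trans hx1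
  have hy1 : y 1 = φ - 1 := by linarith [h.isDist₂.add_eq_one]
  have h₁ := h.indifferent₁
  have h₂ := h.indifferent₂
  have hz := h.isDist₃.add_add_eq_one
  rw [hy0, hy1] at h₁
  rw [hx0, hx1] at h₂
  have z0_eq_mul : z 0 = φ * z 2 := by
    linear_combination (φ + 1) / 2 * (h₁ - h₂) + (z 0 + z 2) * Real.goldenRatio_sq
  have hz2 : z 2 = 1 / 4 := by linear_combination (hz - h₂ - 2 * z0_eq_mul) / 4
  have hz0 : z 0 = φ / 4 := by rw [z0_eq_mul, hz2]; ring
  have hz1 : z 1 = (3 - φ) / 4 := by linarith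
  rw [xstar_eq, ystar_eq, zstar_eq]
  refine ⟨?_, ?_, ?_⟩
  · ext a; fin_cases a <;> simp [hx0, hx1]
  · ext a; fin_cases a <;> simp [hy0, hy1]
  · ext a; fin_cases a <;> simp [hz0, hz1, hz2]

lemma isDist_xstar : IsDist xstar := by
  rw [xstar_eq]
  exact isDist_pair (by linarith [Real.one_lt_goldenRatio]) (by linarith [Real.goldenRatio_lt_two])
    (by ring)

lemma isDist_ystar : IsDist ystar := by
  rw [ystar_eq]
  exact isDist_pair (by linarith [Real.goldenRatio_lt_two]) (by linarith [Real.one_lt_goldenRatio])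
    (by ring)

lemma isDist_zstar : IsDist zstar := by
  rw [zstar_eq]
  exact isDist_triple (by linarith [Real.goldenRatio_pos])
    (by linarith [Real.goldenRatio_lt_two]) (by norm_num) (by ring)

theorem isNashG2_star : IsNashG2 xstar ystar zstar := by
  refine isNashG2_of_indifferent isDist_xstar isDist_ystar isDist_zstar ?_ ?_ ?_ ?_ <;>
    simp only [xstar_eq, ystar_eq, zstar_eq, Matrix.cons_val]
  · linear_combination -Real.goldenRatio_sq / 2
  · ring
  · linear_combination -Real.goldenRatio_sq

lemma irrational_xstar_zero : Irrational (xstar 0) := by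
  simpa [xstar_eq] using Real.goldenRatio_irrational.sub_natCast 1

/-- The 3-player win-lose game `Ĝ₂` has exactly one Nash equilibrium, namely the explicit
profile `⟨xstar, ystar, zstar⟩`, and this Nash equilibrium is irrational. -/
theorem G2_unique_nash_is_irrational :
    IsNashG2 xstar ystar zstar ∧
    (∀ x y z, IsNashG2 x y z → x = xstar ∧ y = ystar ∧ z = zstar) ∧
    ((∃ a, Irrational (xstar a)) ∨ (∃ b, Irrational (ystar b)) ∨
      (∃ c, Irrational (zstar c))) :=
  ⟨isNashG2_star, fun _ _ _ h ↦ h.eq_star, .inl ⟨0, irrational_xstar_zero⟩⟩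
end

section
/- The win-lose bimatrix game Ĝ₄ has no symmetric Nash equilibrium, i.e., no Nash equilibrium ⟨σ_1, σ_2⟩ with σ_1 = σ_2. -/
open Finset

/-- Expected utility, in a bimatrix game, of the player whose utility matrix is `M`. -/
noncomputable def pay {α : Type*} [Fintype α] (M : α → α → ℝ) (x y : α → ℝ) : ℝ :=
  ∑ s₁, ∑ s₂, x s₁ * y s₂ * M s₁ s₂

/-- `⟨x, y⟩` is a (mixed) Nash equilibrium of the bimatrix game `⟨R, C⟩`. -/
def IsNash {α : Type*} [Fintype α] (R C : α → α → ℝ) (x y : α → ℝ) : Prop :=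
  IsDist x ∧ IsDist y ∧
    (∀ x', IsDist x' → pay R x' y ≤ pay R x y) ∧
    (∀ y', IsDist y' → pay C x y' ≤ pay C x y)

/-- Utility matrix of the row player in the game `Ĝ₄`. -/
noncomputable def G4R : Fin 3 → Fin 3 → ℝ :=
  ![![1, 0, 1], ![0, 0, 1], ![0, 1, 0]]

/-- Utility matrix of the column player in the game `Ĝ₄`. -/
noncomputable def G4C : Fin 3 → Fin 3 → ℝ :=
  ![![0, 1, 0], ![1, 0, 0], ![1, 0, 1]]

/-
Every pure strategy in the support of an equilibrium strategy is a best reply. Against `(a, b, c)`,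
the pure strategies of the row player earn `a + c, c, b` and those of the column player earn
`b + c, a, c`. If `0 < c`, the last strategy is a best reply for both players only if `a + c ≤ b`
and `b + c ≤ c`, which is absurd. If `0 < b`, the middle one must satisfy `a + c ≤ c` and
`b + c ≤ a`, again absurd. So both would play the first strategy purely, and then the column player
prefers the middle one.
-/

open scoped Matrix

section StdSimplex

variable {𝕜 α : Type*} [Semiring 𝕜] [PartialOrder 𝕜] [IsStrictOrderedRing 𝕜] [Fintype α]

lemma le_of_isMaxOn_dotProduct_stdSimplex {u x : α → 𝕜} (hx : x ∈ stdSimplex 𝕜 α)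
    (hmax : IsMaxOn (· ⬝ᵥ u) (stdSimplex 𝕜 α) x) {s : α} (hs : 0 < x s) (t : α) :
    u t ≤ u s := by
  classical
  have le_value (i : α) : u i ≤ x ⬝ᵥ u := by
    simpa only [single_one_dotProduct] using isMaxOn_iff.1 hmax _ (single_mem_stdSimplex 𝕜 i)
  have sum_eq : ∑ i, x i * u i = ∑ i, x i * (x ⬝ᵥ u) := by
    rw [← Finset.sum_mul, hx.2, one_mul, dotProduct]
  have term_eq : x s * u s = x s * (x ⬝ᵥ u) :=
    (Finset.sum_eq_sum_iff_of_le fun i _ ↦ mul_le_mul_of_nonneg_left (le_value i) (hx.1 i)).1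
      sum_eq s (Finset.mem_univ s)
  have value_eq : u s = x ⬝ᵥ u :=
    (le_value s).eq_of_not_lt fun hlt ↦ (mul_lt_mul_of_pos_left hlt hs).ne term_eq
  exact (le_value t).trans_eq value_eq.symm

end StdSimplex

section Bimatrix

variable {α : Type*} [Fintype α]

lemma pay_eq_dotProduct_mulVec (M : α → α → ℝ) (x y : α → ℝ) :
    pay M x y = x ⬝ᵥ Matrix.of M *ᵥ y := by
  simp only [pay, dotProduct, Matrix.mulVec, Matrix.of_apply, Finset.mul_sum]
  exact Finset.sum_congr rfl fun _ _ ↦ Finset.sum_congr rfl fun _ _ ↦ by ring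

lemma pay_eq_dotProduct_vecMul (M : α → α → ℝ) (x y : α → ℝ) :
    pay M x y = y ⬝ᵥ x ᵥ* Matrix.of M := by
  rw [pay_eq_dotProduct_mulVec, Matrix.dotProduct_mulVec, dotProduct_comm]

variable {R C : α → α → ℝ} {x y : α → ℝ}

lemma IsNash.mulVec_le_of_pos (h : IsNash R C x y) {s : α} (hs : 0 < x s) (t : α) :
    (Matrix.of R *ᵥ y) t ≤ (Matrix.of R *ᵥ y) s := by
  obtain ⟨hx, -, hrow, -⟩ := h
  refine le_of_isMaxOn_dotProduct_stdSimplex hx (isMaxOn_iff.2 fun x' hx' ↦ ?_) hs t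
  simpa only [pay_eq_dotProduct_mulVec] using hrow x' hx'

lemma IsNash.vecMul_le_of_pos (h : IsNash R C x y) {s : α} (hs : 0 < y s) (t : α) :
    (x ᵥ* Matrix.of C) t ≤ (x ᵥ* Matrix.of C) s := by
  obtain ⟨-, hy, -, hcol⟩ := h
  refine le_of_isMaxOn_dotProduct_stdSimplex hy (isMaxOn_iff.2 fun y' hy' ↦ ?_) hs t
  simpa only [pay_eq_dotProduct_vecMul] using hcol y' hy'

end Bimatrix

lemma G4R_mulVec (y : Fin 3 → ℝ) : Matrix.of G4R *ᵥ y = ![y 0 + y 2, y 2, y 1] := by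
  ext i
  fin_cases i <;> simp [Matrix.mulVec, dotProduct, Fin.sum_univ_three, G4R]

lemma vecMul_G4C (x : Fin 3 → ℝ) : x ᵥ* Matrix.of G4C = ![x 1 + x 2, x 0, x 2] := by
  ext i
  fin_cases i <;> simp [Matrix.vecMul, dotProduct, Fin.sum_univ_three, G4C]

section Symmetric

variable {x : Fin 3 → ℝ}

lemma IsNash.G4_apply_two_eq_zero (h : IsNash G4R G4C x x) : x 2 = 0 := by
  by_contra hne
  have pos : 0 < x 2 := (h.1.1 2).lt_of_ne' hne
  have row : x 0 + x 2 ≤ x 1 := by simpa [G4R_mulVec] using h.mulVec_le_of_pos pos 0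
  have col : x 1 + x 2 ≤ x 2 := by simpa [vecMul_G4C] using h.vecMul_le_of_pos pos 0
  linarith [h.1.1 0]

lemma IsNash.G4_apply_one_eq_zero (h : IsNash G4R G4C x x) : x 1 = 0 := by
  by_contra hne
  have pos : 0 < x 1 := (h.1.1 1).lt_of_ne' hne
  have row : x 0 + x 2 ≤ x 2 := by simpa [G4R_mulVec] using h.mulVec_le_of_pos pos 0
  have col : x 1 + x 2 ≤ x 0 := by simpa [vecMul_G4C] using h.vecMul_le_of_pos pos 0
  linarith [h.1.1 2]

end Symmetric

/-- The win-lose bimatrix game `Ĝ₄` has no symmetric Nash equilibrium: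
no Nash equilibrium `⟨σ₁, σ₂⟩` with `σ₁ = σ₂`. -/
theorem G4_no_symmetric_nash :
    ¬ ∃ x y : Fin 3 → ℝ, IsNash G4R G4C x y ∧ x = y := by
  rintro ⟨x, _, h, rfl⟩
  have two : x 2 = 0 := h.G4_apply_two_eq_zero
  have one : x 1 = 0 := h.G4_apply_one_eq_zero
  have zero : x 0 = 1 := by simpa [Fin.sum_univ_three, one, two] using h.1.2
  have pos : 0 < x 0 := zero ▸ one_pos
  have col : x 0 ≤ x 1 + x 2 := by simpa [vecMul_G4C] using h.vecMul_le_of_pos pos 1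
  linarith
end

section
/- Let ⟨R,C⟩ be a win-lose bimatrix game with the positive utility property and let τ and ρ be Nash equilibria of ⟨R,C⟩. Then for each player i ∈ {1,2}, the expected utility of player i in the balanced mixture τ ∗ ρ (computed in the GHR-symmetrization) satisfies Ũ_i(τ ∗ ρ) < max{ Ū_1(ρ), Ū_1(τ), Ū_2(ρ), Ū_2(τ) }. -/
open Finset

/-- The pair `p` is a Nash equilibrium of the bimatrix game `⟨R, C⟩`. -/
def NEPair {α : Type*} [Fintype α] (R C : α → α → ℝ) (p : (α → ℝ) × (α → ℝ)) : Prop :=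
  IsNash R C p.1 p.2

/-- All entries of `M` lie in `{0, 1}`. -/
def WinLose {α : Type*} (M : α → α → ℝ) : Prop :=
  ∀ s₁ s₂, M s₁ s₂ = 0 ∨ M s₁ s₂ = 1

/-- The matrix `S = [[0, R], [Cᵀ, 0]]` of the GHR-symmetrization of `⟨R, C⟩`. -/
def ghrS {n : ℕ} (R C : Fin n → Fin n → ℝ) :
    (Fin n ⊕ Fin n) → (Fin n ⊕ Fin n) → ℝ
  | .inl i, .inr j => R i j
  | .inr i, .inl j => C j i
  | _, _ => 0

/-- The transpose `Sᵀ` of the matrix of the GHR-symmetrization. -/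
def ghrST {n : ℕ} (R C : Fin n → Fin n → ℝ) :
    (Fin n ⊕ Fin n) → (Fin n ⊕ Fin n) → ℝ :=
  fun a b => ghrS R C b a

/-- The balanced mixture `a ∗ b` of `a` and `b`, a mixed profile of the
GHR-symmetrization of `⟨R, C⟩` (the two halves of each strategy vector being indexed
by `Fin n ⊕ Fin n`). -/
noncomputable def bmix {n : ℕ} (R C : Fin n → Fin n → ℝ)
    (a b : (Fin n → ℝ) × (Fin n → ℝ)) :
    ((Fin n ⊕ Fin n) → ℝ) × ((Fin n ⊕ Fin n) → ℝ) :=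
  ( Sum.elim (fun s => pay R b.1 b.2 / (pay R b.1 b.2 + pay C a.1 a.2) * a.1 s)
             (fun s => pay C a.1 a.2 / (pay R b.1 b.2 + pay C a.1 a.2) * b.2 s),
    Sum.elim (fun s => pay R a.1 a.2 / (pay R a.1 a.2 + pay C b.1 b.2) * b.1 s)
             (fun s => pay C b.1 b.2 / (pay R a.1 a.2 + pay C b.1 b.2) * a.2 s) )

/-!
Let `a = Ū₁(τ)`, `b = Ū₂(ρ)`, `c = Ū₁(ρ)`, `d = Ū₂(τ)`. In `τ ∗ ρ` player 1 earns `a` in the block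
of `S` holding `R`, which has weight `c / (c + d) * (b / (a + b))`, and `b` in the block holding
`Cᵀ`, which has weight `d / (c + d) * (a / (a + b))`. The factors in `c` and `d` sum to one, so the
utility is `a * b / (a + b)`, which is below `max a b` as soon as `0 < a + b`.
Exchanging the players of the symmetrization exchanges `τ` and `ρ`, which settles player 2.
-/

theorem mul_div_add_lt_max {K : Type*} [Field K] [LinearOrder K] [IsStrictOrderedRing K]
    {a b : K} (h : 0 < a + b) : a * b / (a + b) < max a b := by
  rw [div_lt_iff₀ h]
  rcases le_total a b with hab | hba
  · have b_pos : 0 < b := by linarith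
    rw [max_eq_right hab]
    linarith [mul_pos b_pos b_pos]
  · have a_pos : 0 < a := by linarith
    rw [max_eq_left hba]
    linarith [mul_pos a_pos a_pos]

theorem WinLose.nonneg {α : Type*} {M : α → α → ℝ} (hM : WinLose M) (s t : α) : 0 ≤ M s t := by
  rcases hM s t with h | h <;> simp [h]

section Pay

variable {α : Type*} [Fintype α]

theorem pay_swap (M : α → α → ℝ) (x y : α → ℝ) :
    pay (fun s t => M t s) x y = pay M y x := by
  simp only [pay]
  rw [Finset.sum_comm]
  simp only [mul_comm (x _)]

theorem pay_mul_mul (M : α → α → ℝ) (a b : ℝ) (x y : α → ℝ) :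
    pay M (fun s => a * x s) (fun t => b * y t) = a * b * pay M x y := by
  simp only [pay, Finset.mul_sum]
  exact Finset.sum_congr rfl fun s _ => Finset.sum_congr rfl fun t _ => by ring

theorem pay_single_left [DecidableEq α] (M : α → α → ℝ) (s : α) (y : α → ℝ) :
    pay M (Pi.single s 1) y = ∑ t, y t * M s t := by
  simp [pay, Pi.single_apply]

end Pay

section Equilibrium

variable {α : Type*} [Fintype α] {R C : α → α → ℝ} {x y : α → ℝ}

theorem isDist_single [DecidableEq α] (s : α) : IsDist (Pi.single s 1 : α → ℝ) :=
  single_mem_stdSimplex ℝ s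

theorem IsDist.exists_pos (hx : IsDist x) : ∃ s, 0 < x s := by
  have sum_pos : ∑ _s : α, (0 : ℝ) < ∑ s, x s := by simp [hx.2]
  obtain ⟨s, -, hs⟩ := Finset.exists_lt_of_sum_lt sum_pos
  exact ⟨s, hs⟩

theorem IsNash.swap (h : IsNash R C x y) :
    IsNash (fun s t => C t s) (fun s t => R t s) y x := by
  obtain ⟨hx, hy, best_left, best_right⟩ := h
  refine ⟨hy, hx, fun y' hy' => ?_, fun x' hx' => ?_⟩
  · simpa only [pay_swap] using best_right y' hy'
  · simpa only [pay_swap] using best_left x' hx'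

theorem IsNash.pay_left_pos (h : IsNash R C x y) (nonneg : ∀ s t, 0 ≤ R s t)
    (exists_pos : ∀ t, ∃ s, 0 < R s t) : 0 < pay R x y := by
  classical
  obtain ⟨-, hy, best_left, -⟩ := h
  obtain ⟨t, ht⟩ := hy.exists_pos
  obtain ⟨s, hs⟩ := exists_pos t
  calc 0 < ∑ t, y t * R s t :=
        Finset.sum_pos' (fun t _ => mul_nonneg (hy.1 t) (nonneg s t))
          ⟨t, Finset.mem_univ t, mul_pos ht hs⟩
    _ = pay R (Pi.single s 1) y := (pay_single_left R s y).symm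
    _ ≤ pay R x y := best_left _ (isDist_single s)

theorem IsNash.pay_right_pos (h : IsNash R C x y) (nonneg : ∀ s t, 0 ≤ C s t)
    (exists_pos : ∀ s, ∃ t, 0 < C s t) : 0 < pay C x y := by
  rw [← pay_swap]
  exact h.swap.pay_left_pos (fun s t => nonneg t s) exists_pos

end Equilibrium

section BalancedMixture

variable {n : ℕ} (R C : Fin n → Fin n → ℝ)

theorem pay_ghrS_sumElim (x₁ x₂ y₁ y₂ : Fin n → ℝ) :
    pay (ghrS R C) (Sum.elim x₁ x₂) (Sum.elim y₁ y₂) = pay R x₁ y₂ + pay C y₁ x₂ := by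
  rw [← pay_swap C]
  simp [pay, ghrS, Fintype.sum_sum_type]

theorem bmix_swap (τ ρ : (Fin n → ℝ) × (Fin n → ℝ)) :
    (bmix R C τ ρ).swap = bmix R C ρ τ :=
  rfl

theorem pay_ghrST_bmix (τ ρ : (Fin n → ℝ) × (Fin n → ℝ)) :
    pay (ghrST R C) (bmix R C τ ρ).1 (bmix R C τ ρ).2 =
      pay (ghrS R C) (bmix R C ρ τ).1 (bmix R C ρ τ).2 := by
  rw [← bmix_swap R C τ ρ]
  exact pay_swap (ghrS R C) _ _

variable {R C} {τ ρ : (Fin n → ℝ) × (Fin n → ℝ)}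

theorem pay_ghrS_bmix (h : pay R ρ.1 ρ.2 + pay C τ.1 τ.2 ≠ 0) :
    pay (ghrS R C) (bmix R C τ ρ).1 (bmix R C τ ρ).2 =
      pay R τ.1 τ.2 * pay C ρ.1 ρ.2 / (pay R τ.1 τ.2 + pay C ρ.1 ρ.2) := by
  simp only [bmix, pay_ghrS_sumElim, pay_mul_mul]
  generalize pay R τ.1 τ.2 = a, pay C ρ.1 ρ.2 = b, pay R ρ.1 ρ.2 = c, pay C τ.1 τ.2 = d at h ⊢
  calc c / (c + d) * (b / (a + b)) * a + a / (a + b) * (d / (c + d)) * b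
      = (c + d) / (c + d) * (a * b / (a + b)) := by ring
    _ = a * b / (a + b) := by rw [div_self h, one_mul]

theorem pay_ghrS_bmix_lt_max (hτρ : 0 < pay R τ.1 τ.2 + pay C ρ.1 ρ.2)
    (hρτ : 0 < pay R ρ.1 ρ.2 + pay C τ.1 τ.2) :
    pay (ghrS R C) (bmix R C τ ρ).1 (bmix R C τ ρ).2 <
      max (pay R τ.1 τ.2) (pay C ρ.1 ρ.2) := by
  rw [pay_ghrS_bmix hρτ.ne']
  exact mul_div_add_lt_max hτρ

/-- The two sums are the normalizing constants of the two strategies of `τ ∗ ρ`; they are positive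
also for an equilibrium `τ` and `ρ = ⟨0ⁿ, 0ⁿ⟩`. -/
theorem balanced_mixture_utility_lt_max_general
    (hτρ : 0 < pay R τ.1 τ.2 + pay C ρ.1 ρ.2) (hρτ : 0 < pay R ρ.1 ρ.2 + pay C τ.1 τ.2) :
    pay (ghrS R C) (bmix R C τ ρ).1 (bmix R C τ ρ).2 <
      max (max (pay R ρ.1 ρ.2) (pay R τ.1 τ.2)) (max (pay C ρ.1 ρ.2) (pay C τ.1 τ.2)) ∧
    pay (ghrST R C) (bmix R C τ ρ).1 (bmix R C τ ρ).2 <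
      max (max (pay R ρ.1 ρ.2) (pay R τ.1 τ.2)) (max (pay C ρ.1 ρ.2) (pay C τ.1 τ.2)) := by
  rw [pay_ghrST_bmix]
  exact ⟨(pay_ghrS_bmix_lt_max hτρ hρτ).trans_le
      (max_le_max (le_max_right _ _) (le_max_left _ _)),
    (pay_ghrS_bmix_lt_max hρτ hτρ).trans_le
      (max_le_max (le_max_left _ _) (le_max_right _ _))⟩

end BalancedMixture

/-- For Nash equilibria `τ`, `ρ` of a win-lose bimatrix game `⟨R, C⟩` with the positive
utility property, each player's expected utility in the balanced mixture `τ ∗ ρ`,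
computed in the GHR-symmetrization `⟨S, Sᵀ⟩`, is strictly below the maximum of the four
expected utilities `Ū₁(ρ), Ū₁(τ), Ū₂(ρ), Ū₂(τ)`. -/
theorem balanced_mixture_utility_lt_max {n : ℕ}
    (R C : Fin n → Fin n → ℝ) (hR : WinLose R) (hC : WinLose C)
    (pupR : ∀ s₂, ∃ s₁, 0 < R s₁ s₂) (pupC : ∀ s₁, ∃ s₂, 0 < C s₁ s₂)
    (τ ρ : (Fin n → ℝ) × (Fin n → ℝ))
    (hτ : NEPair R C τ) (hρ : NEPair R C ρ) :
    pay (ghrS R C) (bmix R C τ ρ).1 (bmix R C τ ρ).2 <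
      max (max (pay R ρ.1 ρ.2) (pay R τ.1 τ.2)) (max (pay C ρ.1 ρ.2) (pay C τ.1 τ.2)) ∧
    pay (ghrST R C) (bmix R C τ ρ).1 (bmix R C τ ρ).2 <
      max (max (pay R ρ.1 ρ.2) (pay R τ.1 τ.2)) (max (pay C ρ.1 ρ.2) (pay C τ.1 τ.2)) := by
  have normalizer_pos {p q} (hp : NEPair R C p) (hq : NEPair R C q) :=
    add_pos (IsNash.pay_left_pos hp hR.nonneg pupR) (IsNash.pay_right_pos hq hC.nonneg pupC)
  exact balanced_mixture_utility_lt_max_general (normalizer_pos hτ hρ) (normalizer_pos hρ hτ)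
end
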